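/- arXiv:2106.01070 — 4 statements merged into one kernel-verified Lean document; each statement's English description precedes it below -/
import Mathlib

section
/- The Wasserstein projection of the empirical measure onto the fair set equals the value of a finite linear program: 𝒫(P̂_N) := inf_{Q ∈ ℱ} W_c(Q, P̂_N) equals the optimal value of min_p (1/N) Σ_{i=1}^N p_i d(x_i) subject to p ∈ [0,1]^N and Σ_{i=1}^N (1 − 2𝒞(x_i)) φ(u_i, E_{P̂_N}[U]) p_i = − Σ_{i=1}^N 𝒞(x_i) φ(u_i, E_{P̂_N}[U]), with the convention that both sides equal +∞ when the constraint set is empty. -/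
open BigOperators ENNReal MeasureTheory
open scoped Classical

noncomputable section

/-- Optimal transport cost between two measures, for a cost `c`:
`W_c(Q₁,Q₂) = inf { E_π[c(Z,Z')] : π a coupling of (Q₁,Q₂) }`. -/
def Wcost {Z : Type*} [MeasurableSpace Z] (c : Z → Z → ℝ≥0∞) (μ ν : Measure Z) : ℝ≥0∞ :=
  ⨅ π ∈ {π : Measure (Z × Z) |
      π.map Prod.fst = μ ∧ π.map Prod.snd = ν}, ∫⁻ p, c p.1 p.2 ∂π

/-- The transport cost on `𝒵 = 𝒳 × 𝒜 × 𝒴` built from a ground cost `c̄` on features: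
`c((x,a,y),(x',a',y')) = c̄(x,x') + ∞·|a−a'| + ∞·|y−y'|` (with `∞·0 = 0`). -/
def prodCost {X A : Type*} (cbar : X → X → ℝ≥0∞) :
    (X × A × Bool) → (X × A × Bool) → ℝ≥0∞ :=
  fun z z' => cbar z.1 z'.1 + (if z.2.1 = z'.2.1 then (0 : ℝ≥0∞) else ⊤) +
    (if z.2.2 = z'.2.2 then (0 : ℝ≥0∞) else ⊤)

/-- Distance to the set of features with the opposite classifier label:
`d(x) = inf { c̄(x,x') : 𝒞(x') = 1 − 𝒞(x) }`. -/
def dBoundary {X : Type*} (cbar : X → X → ℝ≥0∞) (C : X → ℝ) (x : X) : ℝ≥0∞ :=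
  ⨅ x' ∈ {x' | C x' = 1 - C x}, cbar x x'

/-- The set of distributions on `𝒵` under which the classifier `𝒞` is fair with
respect to the discerning tuple `(U, φ)`: `ℱ = { Q : E_Q[𝒞(X) φ(U, E_Q[U])] = 0 }`. -/
def fairSet {d s m : ℕ} (𝒳 : Set (Fin d → ℝ)) (𝒜 : Type*) [MeasurableSpace 𝒜]
    (C : ↥𝒳 → ℝ) (ψ : 𝒜 × Bool → Fin s → ℝ)
    (φ : (Fin s → ℝ) → (Fin s → ℝ) → Fin m → ℝ) :
    Set (Measure (↥𝒳 × 𝒜 × Bool)) :=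
  {Q | IsProbabilityMeasure Q ∧
    (∫ z, C z.1 • φ (ψ z.2) (∫ z', ψ z'.2 ∂Q) ∂Q) = 0}

/-- The empirical measure `P̂_N = N⁻¹ Σᵢ δ_{(xᵢ,aᵢ,yᵢ)}`. -/
def empMeasure {d : ℕ} {𝒳 : Set (Fin d → ℝ)} {𝒜 : Type*} [MeasurableSpace 𝒜]
    {N : ℕ} (x : Fin N → ↥𝒳) (a : Fin N → 𝒜) (y : Fin N → Bool) :
    Measure (↥𝒳 × 𝒜 × Bool) :=
  (N : ℝ≥0∞)⁻¹ • ∑ i, Measure.dirac (x i, a i, y i)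

theorem aux_int {Z E ι : Type*} [MeasurableSpace Z] [NormedAddCommGroup E] [NormedSpace ℝ E]
    [Fintype ι] (N : ℕ) (ρ : ι → Measure (Z × Z)) [∀ i, IsProbabilityMeasure (ρ i)]
    (f : Z → E) (hf : StronglyMeasurable f) (K : ℝ) (hK : ∀ z, ‖f z‖ ≤ K) :
    ∫ z, f z ∂(((N : ℝ≥0∞)⁻¹ • ∑ i, ρ i).map Prod.fst) = (N : ℝ)⁻¹ • ∑ i, ∫ w, f w.1 ∂(ρ i) := by
  rw [integral_map measurable_fst.aemeasurable hf.aestronglyMeasurable, integral_smul_measure,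
    integral_finsetSum_measure]
  · simp
  · intro i _
    exact Integrable.of_bound (hf.comp_measurable measurable_fst).aestronglyMeasurable K
      (Filter.Eventually.of_forall fun w => hK w.1)

theorem aux_fair {d s m : ℕ} (𝒳 : Set (Fin d → ℝ)) (𝒜 : Type*)
    [MeasurableSpace 𝒜] [Fintype 𝒜] [MeasurableSingletonClass 𝒜]
    (C : ↥𝒳 → ℝ) (hC_bin : ∀ x, C x = 0 ∨ C x = 1) (hC_meas : Measurable C)
    (ψ : 𝒜 × Bool → Fin s → ℝ)
    (φ : (Fin s → ℝ) → (Fin s → ℝ) → Fin m → ℝ)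
    {N : ℕ} (hN : 0 < N)
    (x : Fin N → ↥𝒳) (a : Fin N → 𝒜) (y : Fin N → Bool)
    (ρ : Fin N → Measure ((↥𝒳 × 𝒜 × Bool) × (↥𝒳 × 𝒜 × Bool))) [∀ i, IsProbabilityMeasure (ρ i)]
    (hρ : ∀ i, ∀ᵐ w ∂(ρ i), w.1.2 = (a i, y i)) :
    let Q := ((N : ℝ≥0∞)⁻¹ • ∑ i, ρ i).map Prod.fst
    (∫ z, C z.1 • φ (ψ z.2) (∫ z', ψ z'.2 ∂Q) ∂Q) = 0 ↔
      ∑ i, ((1 - 2 * C (x i)) * (ρ i).real {w | C w.1.1 = 1 - C (x i)}) •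
            φ (ψ (a i, y i)) ((N : ℝ)⁻¹ • ∑ j, ψ (a j, y j))
          = - ∑ i, C (x i) •
            φ (ψ (a i, y i)) ((N : ℝ)⁻¹ • ∑ j, ψ (a j, y j)) := by
  intro Q
  have hb : ∀ {k : ℕ} (G : 𝒜 × Bool → Fin k → ℝ), ∃ K : ℝ, ∀ z, ‖G z‖ ≤ K := fun G =>
    ⟨∑ z, ‖G z‖, fun z => Finset.single_le_sum (f := fun z => ‖G z‖)
      (fun _ _ => norm_nonneg _) (Finset.mem_univ z)⟩
  have hU : (∫ z', ψ z'.2 ∂Q) = (N : ℝ)⁻¹ • ∑ j, ψ (a j, y j) := by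
    obtain ⟨K, hK⟩ := hb ψ
    rw [aux_int N ρ (fun z => ψ z.2)
      ((Measurable.of_discrete (f := ψ)).comp measurable_snd).stronglyMeasurable K (fun z => hK z.2)]
    congr 1
    refine Finset.sum_congr rfl fun i _ => ?_
    have : ∫ w, ψ w.1.2 ∂(ρ i) = ∫ w, ψ (a i, y i) ∂(ρ i) :=
      integral_congr_ae ((hρ i).mono fun w hw => by simp only [hw])
    rw [this]; simp
  rw [hU]
  set u := (N : ℝ)⁻¹ • ∑ j, ψ (a j, y j) with hu
  obtain ⟨K, hK⟩ := hb (fun t => φ (ψ t) u)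
  have hC1 : ∀ x, ‖C x‖ ≤ 1 := fun x => by rcases hC_bin x with h | h <;> simp [h]
  have hm : Measurable (fun z : ↥𝒳 × 𝒜 × Bool => C z.1 • φ (ψ z.2) u) :=
    (hC_meas.comp measurable_fst).smul
      ((Measurable.of_discrete (f := fun t => φ (ψ t) u)).comp measurable_snd)
  have h1 := aux_int N ρ (fun z => C z.1 • φ (ψ z.2) u) hm.stronglyMeasurable K (fun z => by
    rw [norm_smul]
    calc _ ≤ 1 * ‖φ (ψ z.2) u‖ := by gcongr; exact hC1 _
      _ ≤ K := by rw [one_mul]; exact hK z.2)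
  have h2 : ∀ i, ∫ w, C w.1.1 • φ (ψ w.1.2) u ∂(ρ i) =
      ((1 - 2 * C (x i)) * (ρ i).real {w | C w.1.1 = 1 - C (x i)}) • φ (ψ (a i, y i)) u
        + C (x i) • φ (ψ (a i, y i)) u := by
    intro i
    have hms : MeasurableSet {w : (↥𝒳 × 𝒜 × Bool) × (↥𝒳 × 𝒜 × Bool) | C w.1.1 = 1 - C (x i)} :=
      (hC_meas.comp (measurable_fst.comp measurable_fst)) (measurableSet_singleton (1 - C (x i)))
    have e1 : ∫ w, C w.1.1 • φ (ψ w.1.2) u ∂(ρ i) =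
        ∫ w, (Set.indicator {w : (↥𝒳 × 𝒜 × Bool) × (↥𝒳 × 𝒜 × Bool) | C w.1.1 = 1 - C (x i)}
          (fun _ => (1 - 2 * C (x i))) w + C (x i)) • φ (ψ (a i, y i)) u ∂(ρ i) := by
      refine integral_congr_ae ((hρ i).mono fun w hw => ?_)
      simp only [hw]
      congr 1
      by_cases h : C w.1.1 = 1 - C (x i)
      · rw [Set.indicator_of_mem (by exact h), h]; ring
      · rw [Set.indicator_of_notMem (by exact h), zero_add]
        rcases hC_bin w.1.1 with h3 | h3 <;> rcases hC_bin (x i) with h4 | h4 <;>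
          simp_all
    rw [e1, integral_smul_const, integral_add ((integrable_const _).indicator hms)
      (integrable_const _), integral_indicator_const _ hms, add_smul]
    simp [mul_comm]
  change (∫ z, C z.1 • φ (ψ z.2) u ∂(((N : ℝ≥0∞)⁻¹ • ∑ i, ρ i).map Prod.fst)) = 0 ↔ _
  rw [h1, smul_eq_zero_iff_right (by positivity), Finset.sum_congr rfl (fun i _ => h2 i),
    Finset.sum_add_distrib, add_eq_zero_iff_eq_neg]

theorem aux_decomp {Z : Type*} [MeasurableSpace Z] [MeasurableSingletonClass Z] {N : ℕ}
    (hN : 0 < N) (z : Fin N → Z) (π : Measure (Z × Z))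
    (hπ : π.map Prod.snd = (N : ℝ≥0∞)⁻¹ • ∑ i, Measure.dirac (z i)) :
    ∃ ρ : Fin N → Measure (Z × Z), (∀ i, IsProbabilityMeasure (ρ i)) ∧
      (∀ i, ∀ᵐ w ∂(ρ i), w.2 = z i) ∧ (∀ i, ρ i ≪ π) ∧ π = (N : ℝ≥0∞)⁻¹ • ∑ i, ρ i := by
  have hN0 : (N : ℝ≥0∞) ≠ 0 := by exact_mod_cast hN.ne'
  have hNt : (N : ℝ≥0∞) ≠ ⊤ := ENNReal.natCast_ne_top N
  let E : Fin N → Set (Z × Z) := fun i => Prod.snd ⁻¹' {z i}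
  have hE : ∀ i, MeasurableSet (E i) := fun i => measurable_snd (measurableSet_singleton _)
  have hEv : ∀ i, π (E i) = (N : ℝ≥0∞)⁻¹ * ∑ j, if z j = z i then 1 else 0 := by
    intro i
    rw [← Measure.map_apply measurable_snd (measurableSet_singleton _), hπ]
    simp [Set.indicator_apply]
  have hsum0 : ∀ i, (∑ j, if z j = z i then (1 : ℝ≥0∞) else 0) ≠ 0 := by
    intro i h
    rw [Finset.sum_eq_zero_iff] at h
    simpa using h i (Finset.mem_univ i)
  have hE0 : ∀ i, π (E i) ≠ 0 := by
    intro i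
    rw [hEv]
    exact mul_ne_zero (ENNReal.inv_ne_zero.2 hNt) (hsum0 i)
  have hEt : ∀ i, π (E i) ≠ ⊤ := by
    intro i
    rw [hEv]
    refine ENNReal.mul_ne_top (ENNReal.inv_ne_top.2 hN0) (ENNReal.sum_ne_top.2 fun j _ => ?_)
    split_ifs <;> simp
  refine ⟨fun i => (π (E i))⁻¹ • π.restrict (E i), fun i => ⟨?_⟩, fun i => ?_, fun i => ?_, ?_⟩
  · simp [ENNReal.inv_mul_cancel (hE0 i) (hEt i)]
  · exact Measure.ae_smul_measure (ae_restrict_mem (hE i)) _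
  · exact Measure.absolutelyContinuous_of_le Measure.restrict_le_self |>.smul_left _
  · have hae : ∀ᵐ w ∂π, (N : ℝ≥0∞)⁻¹ * ∑ i, (E i).indicator (fun _ => (π (E i))⁻¹) w = 1 := by
      have h0 : ∀ᵐ w ∂π, ∃ i, w.2 = z i := by
        have hfin : MeasurableSet (Set.range z) := (Set.finite_range z).measurableSet
        have : ∀ᵐ w ∂(π.map Prod.snd), w ∈ Set.range z := by
          rw [hπ, ae_iff]
          change ((N : ℝ≥0∞)⁻¹ • ∑ i, Measure.dirac (z i)) (Set.range z)ᶜ = 0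
          simp [Measure.dirac_apply' _ hfin.compl]
        exact (ae_of_ae_map measurable_snd.aemeasurable this).mono fun w ⟨i, hi⟩ => ⟨i, hi.symm⟩
      filter_upwards [h0] with w ⟨i, hi⟩
      have : ∑ j, (E j).indicator (fun _ => (π (E j))⁻¹) w =
          (∑ j, if z j = z i then (1 : ℝ≥0∞) else 0) * (π (E i))⁻¹ := by
        rw [Finset.sum_mul]
        refine Finset.sum_congr rfl fun j _ => ?_
        by_cases h : z j = z i
        · rw [Set.indicator_of_mem (by change w.2 = z j; rw [hi, h]), if_pos h, one_mul]
          simp only [E, h]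
        · rw [Set.indicator_of_notMem (by change ¬ w.2 = z j; rw [hi]; exact fun h' => h h'.symm),
            if_neg h, zero_mul]
      rw [this, ← mul_assoc, ← hEv, ENNReal.mul_inv_cancel (hE0 i) (hEt i)]
    ext B hB
    have : π B = ∫⁻ w in B, 1 ∂π := by simp
    rw [this, ← lintegral_congr_ae (ae_restrict_of_ae hae), lintegral_const_mul _
      (Finset.measurable_fun_sum _ fun i _ => measurable_const.indicator (hE i)), lintegral_finsetSum _
      (fun i _ => measurable_const.indicator (hE i))]
    simp only [Measure.smul_apply, Measure.coe_finsetSum, Finset.sum_apply, smul_eq_mul]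
    congr 1
    refine Finset.sum_congr rfl fun i _ => ?_
    rw [lintegral_indicator_const (hE i), Measure.restrict_apply (hE i), Measure.restrict_apply hB,
      Set.inter_comm]

/-- **Primal linear-programming reformulation of the Wasserstein projection
(Proposition 1).**  The projection distance `𝒫(P̂_N) = inf_{Q ∈ ℱ} W_c(Q, P̂_N)`
equals the optimal value of
`min_p { (1/N) Σᵢ pᵢ d(xᵢ) : p ∈ [0,1]^N, Σᵢ (1−2𝒞(xᵢ)) φ(uᵢ, E_{P̂_N}[U]) pᵢ
  = −Σᵢ 𝒞(xᵢ) φ(uᵢ, E_{P̂_N}[U]) }`,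
both sides being `+∞` when the corresponding constraint set is empty. -/
theorem wasserstein_projection_primal_reformulation
    {d s m : ℕ} (𝒳 : Set (Fin d → ℝ)) (𝒜 : Type*)
    [MeasurableSpace 𝒜] [Fintype 𝒜] [MeasurableSingletonClass 𝒜]
    (cbar : ↥𝒳 → ↥𝒳 → ℝ≥0∞)
    (hc_lsc : LowerSemicontinuous (fun p : ↥𝒳 × ↥𝒳 => cbar p.1 p.2))
    (hc_symm : ∀ x x', cbar x x' = cbar x' x)
    (hc_zero : ∀ x x', cbar x x' = 0 ↔ x = x')
    (C : ↥𝒳 → ℝ) (hC_bin : ∀ x, C x = 0 ∨ C x = 1) (hC_meas : Measurable C)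
    (ψ : 𝒜 × Bool → Fin s → ℝ)
    (φ : (Fin s → ℝ) → (Fin s → ℝ) → Fin m → ℝ)
    {N : ℕ} (hN : 0 < N)
    (x : Fin N → ↥𝒳) (a : Fin N → 𝒜) (y : Fin N → Bool) :
    -- 𝒫(P̂_N)
    (⨅ Q ∈ fairSet 𝒳 𝒜 C ψ φ, Wcost (prodCost cbar) Q (empMeasure x a y))
    =
    -- optimal value of the finite linear program
    ⨅ p ∈ {p : Fin N → ℝ |
        (∀ i, p i ∈ Set.Icc (0:ℝ) 1) ∧
        ∑ i, ((1 - 2 * C (x i)) * p i) •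
            φ (ψ (a i, y i)) ((N : ℝ)⁻¹ • ∑ j, ψ (a j, y j))
          = - ∑ i, C (x i) •
            φ (ψ (a i, y i)) ((N : ℝ)⁻¹ • ∑ j, ψ (a j, y j))},
      (N : ℝ≥0∞)⁻¹ * ∑ i, ENNReal.ofReal (p i) * dBoundary cbar C (x i) := by
  have hN0 : (N : ℝ≥0∞) ≠ 0 := by exact_mod_cast hN.ne'
  have hNt : (N : ℝ≥0∞) ≠ ⊤ := ENNReal.natCast_ne_top N
  apply le_antisymm
  · refine le_iInf₂ fun p hp => ?_
    obtain ⟨hp01, hpc⟩ := hp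
    refine ENNReal.le_of_forall_pos_le_add fun ε hε hfin => ?_
    have hsum : ∀ i, ENNReal.ofReal (p i) * dBoundary cbar C (x i) < ⊤ := by
      intro i
      by_contra h
      have h' : ENNReal.ofReal (p i) * dBoundary cbar C (x i) = ⊤ := not_lt_top_iff.1 h
      have : ∑ i, ENNReal.ofReal (p i) * dBoundary cbar C (x i) = ⊤ :=
        ENNReal.sum_eq_top.2 ⟨i, Finset.mem_univ i, h'⟩
      rw [this, ENNReal.mul_top (ENNReal.inv_ne_zero.2 hNt)] at hfin
      exact lt_irrefl _ hfin
    have hex : ∀ i, ∃ x' : ↥𝒳, (0 < p i → C x' = 1 - C (x i)) ∧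
        ENNReal.ofReal (p i) * cbar x' (x i) ≤
          ENNReal.ofReal (p i) * dBoundary cbar C (x i) + ε := by
      intro i
      by_cases h0 : 0 < p i
      · have hd : dBoundary cbar C (x i) ≠ ⊤ := by
          intro h
          have := hsum i
          rw [h, ENNReal.mul_top (by simpa using h0)] at this
          exact lt_irrefl _ this
        have hlt : dBoundary cbar C (x i) < dBoundary cbar C (x i) + ε :=
          ENNReal.lt_add_right hd (by exact_mod_cast hε.ne')
        obtain ⟨x', hx', hlt'⟩ := by
          simpa only [dBoundary, iInf_lt_iff] using (show
            (⨅ x' ∈ {x' | C x' = 1 - C (x i)}, cbar (x i) x') < _ from hlt)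
        refine ⟨x', fun _ => hx', ?_⟩
        have h1 : ENNReal.ofReal (p i) ≤ 1 := by
          simpa using (hp01 i).2
        calc ENNReal.ofReal (p i) * cbar x' (x i)
            ≤ ENNReal.ofReal (p i) * (dBoundary cbar C (x i) + ε) := by
              rw [hc_symm]; gcongr; exact hlt'.le
          _ = ENNReal.ofReal (p i) * dBoundary cbar C (x i) + ENNReal.ofReal (p i) * ε := mul_add _ _ _
          _ ≤ ENNReal.ofReal (p i) * dBoundary cbar C (x i) + 1 * ε := by gcongr
          _ = _ := by rw [one_mul]
      · refine ⟨x i, fun h => absurd h h0, ?_⟩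
        simp [ENNReal.ofReal_eq_zero.2 (not_lt.1 h0)]
    choose x' hx' hcx' using hex
    let ρ : Fin N → Measure ((↥𝒳 × 𝒜 × Bool) × (↥𝒳 × 𝒜 × Bool)) := fun i =>
      ENNReal.ofReal (1 - p i) • Measure.dirac ((x i, a i, y i), (x i, a i, y i)) +
      ENNReal.ofReal (p i) • Measure.dirac ((x' i, a i, y i), (x i, a i, y i))
    have h1p : ∀ i, ENNReal.ofReal (1 - p i) + ENNReal.ofReal (p i) = 1 := by
      intro i
      rw [← ENNReal.ofReal_add (sub_nonneg.2 (hp01 i).2) (hp01 i).1]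
      simp
    have hρp : ∀ i, IsProbabilityMeasure (ρ i) := fun i => ⟨by simp [ρ, h1p]⟩
    have hρ : ∀ i, ∀ᵐ w ∂(ρ i), w.1.2 = (a i, y i) := by
      intro i
      rw [ae_add_measure_iff]
      exact ⟨Measure.ae_smul_measure (by simp [ae_dirac_eq]) _,
        Measure.ae_smul_measure (by simp [ae_dirac_eq]) _⟩
    have hq : ∀ i, (ρ i).real {w | C w.1.1 = 1 - C (x i)} = p i := by
      intro i
      have hne : ¬ (C (x i) = 1 - C (x i)) := by
        rcases hC_bin (x i) with h | h <;> rw [h] <;> norm_num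
      have : (ρ i) {w | C w.1.1 = 1 - C (x i)} = ENNReal.ofReal (p i) := by
        by_cases h0 : 0 < p i
        · simp [ρ, hne, hx' i h0]
        · simp [ρ, hne, ENNReal.ofReal_eq_zero.2 (not_lt.1 h0)]
      rw [measureReal_def, this, ENNReal.toReal_ofReal (hp01 i).1]
    have hiff := aux_fair 𝒳 𝒜 C hC_bin hC_meas ψ φ hN x a y ρ hρ
    simp only [hq] at hiff
    have hpr : IsProbabilityMeasure ((N : ℝ≥0∞)⁻¹ • ∑ i, ρ i) := ⟨by
      simp [ENNReal.inv_mul_cancel hN0 hNt]⟩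
    refine (iInf₂_le (((N : ℝ≥0∞)⁻¹ • ∑ i, ρ i).map Prod.fst)
      ⟨Measure.isProbabilityMeasure_map measurable_fst.aemeasurable, hiff.2 hpc⟩).trans ?_
    refine (iInf₂_le ((N : ℝ≥0∞)⁻¹ • ∑ i, ρ i) ⟨rfl, ?_⟩).trans ?_
    rotate_left
    · unfold empMeasure
      rw [Measure.map_smul]
      congr 1
      rw [← Measure.mapₗ_apply_of_measurable measurable_snd, map_sum]
      refine Finset.sum_congr rfl fun i _ => ?_
      rw [Measure.mapₗ_apply_of_measurable measurable_snd]
      simp only [ρ]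
      rw [Measure.map_add _ _ measurable_snd, Measure.map_smul, Measure.map_smul,
        Measure.map_dirac' measurable_snd, Measure.map_dirac' measurable_snd, ← add_smul, h1p, one_smul]
    · have hcost : ∀ i, ∫⁻ w, prodCost cbar w.1 w.2 ∂(ρ i) =
          ENNReal.ofReal (p i) * cbar (x' i) (x i) := by
        intro i
        simp [ρ, prodCost, lintegral_add_measure, lintegral_smul_measure, (hc_zero _ _).2 rfl]
      rw [lintegral_smul_measure, lintegral_finsetSum_measure, smul_eq_mul]
      calc (N : ℝ≥0∞)⁻¹ * ∑ i, ∫⁻ w, prodCost cbar w.1 w.2 ∂(ρ i)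
          ≤ (N : ℝ≥0∞)⁻¹ * ∑ i, (ENNReal.ofReal (p i) * dBoundary cbar C (x i) + ε) := by
            gcongr with i
            rw [hcost]; exact hcx' i
        _ = _ := by
            rw [Finset.sum_add_distrib, mul_add]
            simp only [Finset.sum_const, Finset.card_univ, Fintype.card_fin, nsmul_eq_mul]
            rw [← mul_assoc (N : ℝ≥0∞)⁻¹ N, ENNReal.inv_mul_cancel hN0 hNt, one_mul]
  · refine le_iInf₂ fun Q hQ => le_iInf₂ fun π hπ => ?_
    obtain ⟨hQp, hQf⟩ := hQ
    obtain ⟨h1, h2⟩ := hπ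
    by_cases htop : ∫⁻ w, prodCost cbar w.1 w.2 ∂π = ⊤
    · rw [htop]; exact le_top
    obtain ⟨ρ, hρp, hρz, hρπ, hsum⟩ := aux_decomp hN (fun i => (x i, a i, y i)) π h2
    have hD : MeasurableSet {w : (↥𝒳 × 𝒜 × Bool) × (↥𝒳 × 𝒜 × Bool) | w.1.2 = w.2.2} :=
      measurableSet_eq_fun (measurable_snd.comp measurable_fst) (measurable_snd.comp measurable_snd)
    have hDae : ∀ᵐ w ∂π, w.1.2 = w.2.2 := by
      rw [ae_iff]
      change π {w | w.1.2 = w.2.2}ᶜ = 0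
      by_contra hne
      apply htop
      rw [eq_top_iff, ← ENNReal.top_mul hne, ← lintegral_indicator_const hD.compl]
      refine lintegral_mono fun w => ?_
      by_cases h : w.1.2 = w.2.2
      · rw [Set.indicator_of_notMem (by simpa using h)]; exact zero_le
      · simp only [prodCost]
        by_cases h3 : w.1.2.1 = w.2.2.1
        · have h4 : w.1.2.2 ≠ w.2.2.2 := fun h4 => h (Prod.ext h3 h4)
          simp [h4]
        · simp [h3]
    have hρ : ∀ i, ∀ᵐ w ∂(ρ i), w.1.2 = (a i, y i) := by
      intro i
      filter_upwards [hρz i, (hρπ i).ae_le hDae] with w h5 h6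
      rw [h6, h5]
    have hiff := aux_fair 𝒳 𝒜 C hC_bin hC_meas ψ φ hN x a y ρ hρ
    rw [← hsum, h1] at hiff
    refine (iInf₂_le (fun i => (ρ i).real {w | C w.1.1 = 1 - C (x i)})
      ⟨fun i => ⟨measureReal_nonneg, measureReal_le_one⟩, hiff.1 hQf⟩).trans ?_
    conv_rhs => rw [hsum]
    rw [lintegral_smul_measure, lintegral_finsetSum_measure, smul_eq_mul]
    gcongr with i
    rw [ofReal_measureReal]
    have hms : MeasurableSet {w : (↥𝒳 × 𝒜 × Bool) × (↥𝒳 × 𝒜 × Bool) | C w.1.1 = 1 - C (x i)} :=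
      (hC_meas.comp (measurable_fst.comp measurable_fst)) (measurableSet_singleton (1 - C (x i)))
    rw [mul_comm, ← lintegral_indicator_const hms]
    refine lintegral_mono_ae ((hρz i).mono fun w hw => ?_)
    by_cases h : C w.1.1 = 1 - C (x i)
    · rw [Set.indicator_of_mem (by exact h)]
      have h7 : w.2.1 = x i := by rw [hw]
      calc dBoundary cbar C (x i) ≤ cbar (x i) w.1.1 := iInf₂_le w.1.1 h
        _ = cbar w.1.1 w.2.1 := by rw [hc_symm, h7]
        _ ≤ _ := by unfold prodCost; rw [add_assoc]; exact le_self_add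
    · rw [Set.indicator_of_notMem (by exact h)]; exact zero_le
end
end

section
/- Strong duality holds for the projection linear program: given φ_i := φ(u_i, E_{P̂_N}[U]) ∈ ℝ^m, labels 𝒞(x_i) ∈ {0,1} and values d(x_i) ∈ [0,∞], the optimal value of min_p { (1/N) Σ_i p_i d(x_i) : p ∈ [0,1]^N, Σ_i (1−2𝒞(x_i)) φ_i p_i = − Σ_i 𝒞(x_i) φ_i } (equal to +∞ if infeasible, with the convention ∞·0 = 0) equals 𝒟(P̂_N) := sup_{γ ∈ ℝ^m} (1/N) Σ_i [ γᵀφ_i 𝒞(x_i) + ( d(x_i) + (1−2𝒞(x_i)) γᵀφ_i )⁻ ], where (t)⁻ = min{t,0} and (∞ + r)⁻ = 0 for any real r. -/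
open BigOperators ENNReal

noncomputable section

/-- `(D + r)⁻ = min{D + r, 0}`, with the convention `(∞ + r)⁻ = 0` for real `r`,
where `D ∈ [0,∞]` and `r ∈ ℝ`. -/
def negPartE (D : ℝ≥0∞) (r : ℝ) : ℝ := if D = ⊤ then 0 else min (D.toReal + r) 0


theorem negPartE_le (D : ℝ≥0∞) (r p : ℝ) (h0 : 0 ≤ p) (h1 : p ≤ 1) (ht : D = ⊤ → p = 0) :
    negPartE D r ≤ p * (D.toReal + r) := by
  unfold negPartE
  split_ifs with h
  · simp [ht h]
  · rcases le_total (D.toReal + r) 0 with h2 | h2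
    · rw [min_eq_left h2]; nlinarith
    · rw [min_eq_right h2]; positivity

theorem negPartE_attained (D : ℝ≥0∞) (r : ℝ) :
    ∃ p : ℝ, 0 ≤ p ∧ p ≤ 1 ∧ (D = ⊤ → p = 0) ∧ negPartE D r = p * (D.toReal + r) := by
  unfold negPartE
  split_ifs with h
  · exact ⟨0, by simp⟩
  · rcases le_total (D.toReal + r) 0 with h2 | h2
    · exact ⟨1, by simp [h, h2]⟩
    · exact ⟨0, by simp [h2]⟩

theorem lagr_eq {N m : ℕ} (φv : Fin N → Fin m → ℝ) (C : Fin N → ℝ) (dv : Fin N → ℝ≥0∞)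
    (p : Fin N → ℝ) (γ : Fin m → ℝ) :
    ∑ i, ((∑ k, γ k * φv i k) * C i +
      p i * ((dv i).toReal + (1 - 2 * C i) * ∑ k, γ k * φv i k)) =
    ∑ i, p i * (dv i).toReal +
      ∑ k, γ k * (∑ i, (1 - 2 * C i) * φv i k * p i + ∑ i, C i * φv i k) := by
  have : ∑ k, γ k * (∑ i, (1 - 2 * C i) * φv i k * p i + ∑ i, C i * φv i k) =
      ∑ i, ∑ k, (γ k * φv i k) * (C i + p i * (1 - 2 * C i)) := by
    rw [Finset.sum_comm]
    refine Finset.sum_congr rfl fun k _ => ?_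
    rw [← Finset.sum_add_distrib, Finset.mul_sum]
    exact Finset.sum_congr rfl fun i _ => by ring
  rw [this, ← Finset.sum_add_distrib]
  refine Finset.sum_congr rfl fun i _ => ?_
  rw [← Finset.sum_mul]; ring

theorem lp_core {N m : ℕ} (φv : Fin N → Fin m → ℝ) (C : Fin N → ℝ) (dv : Fin N → ℝ≥0∞)
    (β : ℝ) (hβ : ∀ γ : Fin m → ℝ, ∑ i, ((∑ k, γ k * φv i k) * C i +
          negPartE (dv i) ((1 - 2 * C i) * ∑ k, γ k * φv i k)) ≤ β) :
    ∃ p : Fin N → ℝ, (∀ i, p i ∈ Set.Icc (0:ℝ) 1) ∧ (∀ i, dv i = ⊤ → p i = 0) ∧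
      (∀ k, ∑ i, (1 - 2 * C i) * φv i k * p i = - ∑ i, C i * φv i k) ∧
      ∑ i, p i * (dv i).toReal ≤ β := by
  classical
  -- for each multiplier there is a point with small Lagrangian
  have hL : ∀ γ : Fin m → ℝ, ∃ p : Fin N → ℝ, (∀ i, p i ∈ Set.Icc (0:ℝ) 1) ∧
      (∀ i, dv i = ⊤ → p i = 0) ∧ ∑ i, p i * (dv i).toReal +
      ∑ k, γ k * (∑ i, (1 - 2 * C i) * φv i k * p i + ∑ i, C i * φv i k) ≤ β := by
    intro γ
    choose p h0 h1 ht he using fun i =>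
      negPartE_attained (dv i) ((1 - 2 * C i) * ∑ k, γ k * φv i k)
    refine ⟨p, fun i => ⟨h0 i, h1 i⟩, ht, ?_⟩
    rw [← lagr_eq]
    have := hβ γ
    simp only [he] at this
    exact this
  set K : Set (Fin N → ℝ) := Set.pi Set.univ
    (fun i => if dv i = ⊤ then ({0} : Set ℝ) else Set.Icc 0 1) with hK
  have memK : ∀ p, p ∈ K ↔ (∀ i, p i ∈ Set.Icc (0:ℝ) 1) ∧ (∀ i, dv i = ⊤ → p i = 0) := by
    intro p
    simp only [hK, Set.mem_univ_pi, ← forall_and]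
    refine forall_congr' fun i => ?_
    split_ifs with h
    · simp only [Set.mem_singleton_iff, h, true_imp_iff]
      constructor
      · intro h; simp [h]
      · exact fun h => h.2
    · simp [h]
  have Kc : IsCompact K := isCompact_univ_pi fun i => by
    split_ifs
    · exact isCompact_singleton
    · exact isCompact_Icc
  have Kconv : Convex ℝ K := convex_pi fun i _ => by
    split_ifs
    · exact convex_singleton 0
    · exact convex_Icc 0 1
  let F : (Fin N → ℝ) → (Fin m → ℝ) × ℝ := fun p =>
    (fun k => ∑ i, (1 - 2 * C i) * φv i k * p i + ∑ i, C i * φv i k,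
      ∑ i, p i * (dv i).toReal)
  have Fcont : Continuous F := by fun_prop
  have Sc : IsCompact (F '' K) := Kc.image Fcont
  have Sconv : Convex ℝ (F '' K) := by
    rintro _ ⟨p, hp, rfl⟩ _ ⟨q, hq, rfl⟩ a b ha hb hab
    refine ⟨a • p + b • q, Kconv hp hq ha hb hab, ?_⟩
    refine Prod.ext (funext fun k => ?_) ?_
    · simp only [F, Prod.fst_add, Prod.smul_fst, Pi.add_apply, Pi.smul_apply, smul_eq_mul]
      have : ∑ i, C i * φv i k = a * ∑ i, C i * φv i k + b * ∑ i, C i * φv i k := by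
        rw [← add_mul, hab, one_mul]
      have h2 : ∑ i, (1 - 2 * C i) * φv i k * (a * p i + b * q i) =
          a * ∑ i, (1 - 2 * C i) * φv i k * p i + b * ∑ i, (1 - 2 * C i) * φv i k * q i := by
        rw [Finset.mul_sum, Finset.mul_sum, ← Finset.sum_add_distrib]
        exact Finset.sum_congr rfl fun i _ => by ring
      rw [h2]; linarith
    · simp only [F, Prod.snd_add, Prod.smul_snd, Pi.add_apply, Pi.smul_apply, smul_eq_mul]
      rw [Finset.mul_sum, Finset.mul_sum, ← Finset.sum_add_distrib]
      exact Finset.sum_congr rfl fun i _ => by ring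
  let T : Set ((Fin m → ℝ) × ℝ) := {0} ×ˢ Set.Iic β
  have Tconv : Convex ℝ T := (convex_singleton 0).prod (convex_Iic β)
  have Tcl : IsClosed T := isClosed_singleton.prod isClosed_Iic
  by_cases hdisj : Disjoint (F '' K) T
  · exfalso
    obtain ⟨f, u, v, hu, huv, hv⟩ := geometric_hahn_banach_compact_closed Sconv Sc Tconv Tcl hdisj
    set c : ℝ := f (0, 1) with hc
    set g : Fin m → ℝ := fun k => f (Pi.single k 1, 0) with hg
    have hf : ∀ (x : Fin m → ℝ) (y : ℝ), f (x, y) = ∑ k, g k * x k + c * y := by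
      intro x y
      have e : (x, y) = ∑ k, x k • ((Pi.single k 1, 0) : (Fin m → ℝ) × ℝ) + y • (0, 1) := by
        refine Prod.ext ?_ ?_
        · simp only [Prod.fst_add, Prod.fst_sum, Prod.smul_fst, smul_zero, add_zero]
          exact pi_eq_sum_univ' x
        · simp [Prod.snd_sum]
      rw [e, map_add, map_sum, map_smul]
      simp only [map_smul, smul_eq_mul, hg, hc]
      congr 1
      · exact Finset.sum_congr rfl fun k _ => mul_comm _ _
      · ring
    have hvT : ∀ y ≤ β, v < c * y := by
      intro y hy
      have := hv (0, y) ⟨rfl, hy⟩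
      rw [hf] at this
      simpa using this
    have huK : ∀ p ∈ K, ∑ k, g k * (∑ i, (1 - 2 * C i) * φv i k * p i + ∑ i, C i * φv i k) +
        c * ∑ i, p i * (dv i).toReal < u := by
      intro p hp
      have := hu _ ⟨p, hp, rfl⟩
      rw [hf] at this
      exact this
    have hsc : ∀ (t : ℝ) (x : Fin m → ℝ), ∑ k, (t * g k) * x k = t * ∑ k, g k * x k := by
      intro t x
      rw [Finset.mul_sum]
      exact Finset.sum_congr rfl fun i _ => by ring
    have hc0 : c ≤ 0 := by
      by_contra hpos
      push Not at hpos
      have h1 := hvT (min β (v / c)) (min_le_left _ _)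
      have h2 : c * min β (v / c) ≤ c * (v / c) :=
        mul_le_mul_of_nonneg_left (min_le_right _ _) hpos.le
      rw [mul_div_cancel₀ _ hpos.ne'] at h2
      linarith
    rcases hc0.lt_or_eq with hneg | h0
    · obtain ⟨p, hp1, hp2, hp⟩ := hL (fun k => c⁻¹ * g k)
      have h1 := huK p ((memK p).2 ⟨hp1, hp2⟩)
      have h2 := hvT β le_rfl
      rw [hsc] at hp
      have h3 := mul_le_mul_of_nonpos_left hp hneg.le
      rw [mul_add, ← mul_assoc, mul_inv_cancel₀ hneg.ne, one_mul] at h3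
      linarith
    · have hv0 := hvT β le_rfl
      rw [h0, zero_mul] at hv0
      have hu0 : u < 0 := huv.trans hv0
      -- scale
      set t : ℝ := (|β| + 1) / u with ht
      have ht0 : t ≤ 0 := div_nonpos_of_nonneg_of_nonpos (by positivity) hu0.le
      obtain ⟨p, hp1, hp2, hp⟩ := hL (fun k => t * g k)
      have h1 := huK p ((memK p).2 ⟨hp1, hp2⟩)
      rw [h0, zero_mul, add_zero] at h1
      rw [hsc] at hp
      have h3 := mul_le_mul_of_nonpos_left h1.le ht0
      have h4 : t * u = |β| + 1 := div_mul_cancel₀ _ hu0.ne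
      have h5 : 0 ≤ ∑ i, p i * (dv i).toReal :=
        Finset.sum_nonneg fun i _ => mul_nonneg (hp1 i).1 ENNReal.toReal_nonneg
      have := le_abs_self β
      linarith
  · obtain ⟨_, ⟨p, hp, rfl⟩, h1, h2⟩ := Set.not_disjoint_iff.1 hdisj
    obtain ⟨hp1, hp2⟩ := (memK p).1 hp
    refine ⟨p, hp1, hp2, fun k => ?_, h2⟩
    have := congrFun (Set.mem_singleton_iff.1 h1) k
    simp only [F, Pi.zero_apply] at this
    linarith

theorem cost_eq {N : ℕ} (hN : 0 < N) (dv : Fin N → ℝ≥0∞) (p : Fin N → ℝ)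
    (h0 : ∀ i, 0 ≤ p i) (ht : ∀ i, dv i = ⊤ → p i = 0) :
    (N : ℝ≥0∞)⁻¹ * ∑ i, ENNReal.ofReal (p i) * dv i =
      ENNReal.ofReal ((N : ℝ)⁻¹ * ∑ i, p i * (dv i).toReal) := by
  have hN' : (0:ℝ) < N := by exact_mod_cast hN
  rw [ENNReal.ofReal_mul (by positivity), ENNReal.ofReal_inv_of_pos hN', ENNReal.ofReal_natCast,
    ENNReal.ofReal_sum_of_nonneg fun i _ => mul_nonneg (h0 i) ENNReal.toReal_nonneg]
  congr 1
  refine Finset.sum_congr rfl fun i _ => ?_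
  by_cases h : dv i = ⊤
  · simp [ht i h]
  · rw [ENNReal.ofReal_mul (h0 i), ENNReal.ofReal_toReal h]

/-- **Strong duality for the projection linear program (Proposition 2).**
Given `φᵢ := φ(uᵢ, E_{P̂_N}[U]) ∈ ℝ^m`, binary labels `𝒞(xᵢ) ∈ {0,1}` and values
`d(xᵢ) ∈ [0,∞]`, the optimal value of
`min_p { (1/N) Σᵢ pᵢ d(xᵢ) : p ∈ [0,1]^N, Σᵢ (1−2𝒞(xᵢ)) φᵢ pᵢ = − Σᵢ 𝒞(xᵢ) φᵢ }`
(equal to `+∞` if infeasible, with `∞·0 = 0`) equals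
`𝒟(P̂_N) = sup_{γ ∈ ℝ^m} (1/N) Σᵢ [ γᵀφᵢ 𝒞(xᵢ) + (d(xᵢ) + (1−2𝒞(xᵢ)) γᵀφᵢ)⁻ ]`,
the equality being read in the extended reals. -/
theorem projection_strong_duality
    {N m : ℕ} (hN : 0 < N)
    (φv : Fin N → Fin m → ℝ)       -- φᵢ = φ(uᵢ, E_{P̂_N}[U])
    (C : Fin N → ℝ) (hC : ∀ i, C i = 0 ∨ C i = 1)   -- 𝒞(xᵢ)
    (dv : Fin N → ℝ≥0∞) :           -- d(xᵢ)
    ((⨅ p ∈ {p : Fin N → ℝ |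
        (∀ i, p i ∈ Set.Icc (0:ℝ) 1) ∧
        ∀ k, ∑ i, (1 - 2 * C i) * φv i k * p i = - ∑ i, C i * φv i k},
        (N : ℝ≥0∞)⁻¹ * ∑ i, ENNReal.ofReal (p i) * dv i : ℝ≥0∞) : EReal)
    =
    ⨆ γ : Fin m → ℝ,
      (((N : ℝ)⁻¹ * ∑ i, ((∑ k, γ k * φv i k) * C i +
          negPartE (dv i) ((1 - 2 * C i) * ∑ k, γ k * φv i k)) : ℝ) : EReal) := by
  have hN' : (0:ℝ) < N := by exact_mod_cast hN
  apply le_antisymm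
  · set M := ⨆ γ : Fin m → ℝ,
      (((N : ℝ)⁻¹ * ∑ i, ((∑ k, γ k * φv i k) * C i +
          negPartE (dv i) ((1 - 2 * C i) * ∑ k, γ k * φv i k)) : ℝ) : EReal) with hM
    have hle : ∀ γ : Fin m → ℝ, (((N : ℝ)⁻¹ * ∑ i, ((∑ k, γ k * φv i k) * C i +
          negPartE (dv i) ((1 - 2 * C i) * ∑ k, γ k * φv i k)) : ℝ) : EReal) ≤ M :=
      fun γ => le_iSup (fun γ : Fin m → ℝ => (((N : ℝ)⁻¹ * ∑ i, ((∑ k, γ k * φv i k) * C i +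
          negPartE (dv i) ((1 - 2 * C i) * ∑ k, γ k * φv i k)) : ℝ) : EReal)) γ
    clear_value M
    induction M using EReal.rec with
    | bot => exact absurd (le_bot_iff.1 (hle 0)) (EReal.coe_ne_bot _)
    | top => exact le_top
    | coe r =>
      obtain ⟨p, hp1, hp2, hp3, hp4⟩ := lp_core φv C dv (N * r) (fun γ => by
        have := EReal.coe_le_coe_iff.1 (hle γ)
        rwa [inv_mul_le_iff₀ hN'] at this)
      have hS : 0 ≤ ∑ i, p i * (dv i).toReal :=
        Finset.sum_nonneg fun i _ => mul_nonneg (hp1 i).1 ENNReal.toReal_nonneg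
      refine (EReal.coe_ennreal_le_coe_ennreal_iff.2 (iInf₂_le p ⟨hp1, hp3⟩)).trans ?_
      rw [cost_eq hN dv p (fun i => (hp1 i).1) hp2, EReal.coe_ennreal_ofReal,
        max_eq_left (by positivity)]
      rw [EReal.coe_le_coe_iff, inv_mul_le_iff₀ hN']
      exact hp4
  · refine iSup_le fun γ => ?_
    set x : ℝ := (N : ℝ)⁻¹ * ∑ i, ((∑ k, γ k * φv i k) * C i +
          negPartE (dv i) ((1 - 2 * C i) * ∑ k, γ k * φv i k) ) with hx
    have h1 : (x : EReal) ≤ ((ENNReal.ofReal x : ℝ≥0∞) : EReal) := by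
      rw [EReal.coe_ennreal_ofReal]
      exact EReal.coe_le_coe_iff.2 (le_max_left _ _)
    refine h1.trans (EReal.coe_ennreal_le_coe_ennreal_iff.2 (le_iInf₂ fun p hp => ?_))
    obtain ⟨hp1, hp3⟩ := hp
    by_cases ht : ∀ i, dv i = ⊤ → p i = 0
    · rw [cost_eq hN dv p (fun i => (hp1 i).1) ht]
      refine ENNReal.ofReal_le_ofReal (mul_le_mul_of_nonneg_left ?_ (by positivity))
      have hl := lagr_eq φv C dv p γ
      simp only [hp3, neg_add_cancel, mul_zero, Finset.sum_const_zero, add_zero] at hl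
      rw [← hl]
      exact Finset.sum_le_sum fun i _ => add_le_add le_rfl
        (negPartE_le _ _ _ (hp1 i).1 (hp1 i).2 (ht i))
    · push Not at ht
      obtain ⟨i, hi, hpi⟩ := ht
      have hpos : 0 < p i := lt_of_le_of_ne (hp1 i).1 hpi.symm
      have : ∑ i, ENNReal.ofReal (p i) * dv i = ⊤ := by
        rw [ENNReal.sum_eq_top]
        refine ⟨i, Finset.mem_univ _, ?_⟩
        rw [hi, ENNReal.mul_top]
        simpa using hpos
      rw [this, ENNReal.mul_top (by simp)]
      exact le_top
end
end

section
/- Near-optimal projection measure: suppose d(x_i) < +∞ for every i = 1,…,N. Fix ε > 0, and for each i let x_i^ε ∈ 𝒳 satisfy 𝒞(x_i^ε) = 1 − 𝒞(x_i) and c̄(x_i, x_i^ε) ≤ d(x_i) + ε. Let (p_i^⋆)_{i=1}^N be an optimal solution of the linear program min { (1/N) Σ_i p_i d(x_i) : p ∈ [0,1]^N, Σ_i (1−2𝒞(x_i)) φ(u_i, E_{P̂_N}[U]) p_i = − Σ_i 𝒞(x_i) φ(u_i, E_{P̂_N}[U]) }. Then the probability measure Q^ε = (1/N) Σ_{i=1}^N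 [ (1 − p_i^⋆) δ_{(x_i,a_i,y_i)} + p_i^⋆ δ_{(x_i^ε, a_i, y_i)} ] belongs to the fair set ℱ and satisfies W_c(Q^ε, P̂_N) ≤ inf_{Q ∈ ℱ} W_c(Q, P̂_N) + ε. -/
open BigOperators ENNReal MeasureTheory
open scoped Classical

noncomputable section

section helpers

variable {Z : Type*} [MeasurableSpace Z] [MeasurableSingletonClass Z]

lemma aux_integrable_dirac {E : Type*} [NormedAddCommGroup E] (f : Z → E) (z : Z) :
    Integrable f (Measure.dirac z) :=
  integrable_dirac (by simp)

lemma aux_int_emp {E : Type*} [NormedAddCommGroup E] [NormedSpace ℝ E] [CompleteSpace E]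
    {N : ℕ} (z : Fin N → Z) (f : Z → E) :
    ∫ w, f w ∂((N : ℝ≥0∞)⁻¹ • ∑ i, Measure.dirac (z i)) = (N : ℝ)⁻¹ • ∑ i, f (z i) := by
  rw [integral_smul_measure, integral_finset_sum_measure]
  · simp
  · intro i _; exact aux_integrable_dirac f _

lemma aux_lint_emp {N : ℕ} (z : Fin N → Z) (f : Z → ℝ≥0∞) :
    ∫⁻ w, f w ∂((N : ℝ≥0∞)⁻¹ • ∑ i, Measure.dirac (z i)) = (N : ℝ≥0∞)⁻¹ * ∑ i, f (z i) := by
  rw [lintegral_smul_measure, lintegral_finset_sum_measure]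
  simp

lemma aux_prob_emp {N : ℕ} (hN : 0 < N) (z : Fin N → Z) :
    IsProbabilityMeasure ((N : ℝ≥0∞)⁻¹ • ∑ i, Measure.dirac (z i)) := by
  constructor
  simp
  exact ENNReal.inv_mul_cancel (by exact_mod_cast hN.ne') (by simp)

lemma aux_int_eps {E : Type*} [NormedAddCommGroup E] [NormedSpace ℝ E] [CompleteSpace E]
    {N : ℕ} (z z' : Fin N → Z) (p : Fin N → ℝ) (hp : ∀ i, p i ∈ Set.Icc (0:ℝ) 1) (f : Z → E) :
    ∫ w, f w ∂((N : ℝ≥0∞)⁻¹ • ∑ i, (ENNReal.ofReal (1 - p i) • Measure.dirac (z i)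
      + ENNReal.ofReal (p i) • Measure.dirac (z' i)))
      = (N : ℝ)⁻¹ • ∑ i, ((1 - p i) • f (z i) + p i • f (z' i)) := by
  have h1 : ∀ i, Integrable f (ENNReal.ofReal (1 - p i) • Measure.dirac (z i)) := fun i =>
    (aux_integrable_dirac f _).smul_measure (by simp)
  have h2 : ∀ i, Integrable f (ENNReal.ofReal (p i) • Measure.dirac (z' i)) := fun i =>
    (aux_integrable_dirac f _).smul_measure (by simp)
  rw [integral_smul_measure, integral_finset_sum_measure]
  · congr 1
    · simp
    · refine Finset.sum_congr rfl fun i _ => ?_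
      rw [integral_add_measure (h1 i) (h2 i), integral_smul_measure, integral_smul_measure,
        integral_dirac, integral_dirac, ENNReal.toReal_ofReal (by linarith [(hp i).2]),
        ENNReal.toReal_ofReal (hp i).1]
  · intro i _; exact (h1 i).add_measure (h2 i)

lemma aux_lint_eps {N : ℕ} (z z' : Fin N → Z) (p : Fin N → ℝ) (f : Z → ℝ≥0∞) :
    ∫⁻ w, f w ∂((N : ℝ≥0∞)⁻¹ • ∑ i, (ENNReal.ofReal (1 - p i) • Measure.dirac (z i)
      + ENNReal.ofReal (p i) • Measure.dirac (z' i)))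
      = (N : ℝ≥0∞)⁻¹ * ∑ i, (ENNReal.ofReal (1 - p i) * f (z i)
        + ENNReal.ofReal (p i) * f (z' i)) := by
  rw [lintegral_smul_measure, lintegral_finset_sum_measure]
  simp [lintegral_add_measure, lintegral_smul_measure]

lemma aux_one {p : ℝ} (hp : p ∈ Set.Icc (0:ℝ) 1) :
    ENNReal.ofReal (1 - p) + ENNReal.ofReal p = 1 := by
  rw [← ENNReal.ofReal_add (by linarith [hp.2]) hp.1]; simp

lemma aux_prob_eps {N : ℕ} (hN : 0 < N) (z z' : Fin N → Z)
    (p : Fin N → ℝ) (hp : ∀ i, p i ∈ Set.Icc (0:ℝ) 1) :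
    IsProbabilityMeasure ((N : ℝ≥0∞)⁻¹ • ∑ i, (ENNReal.ofReal (1 - p i) • Measure.dirac (z i)
      + ENNReal.ofReal (p i) • Measure.dirac (z' i))) := by
  constructor
  rw [← lintegral_one, aux_lint_eps]
  simp only [mul_one, aux_one (hp _)]
  simp
  exact ENNReal.inv_mul_cancel (by exact_mod_cast hN.ne') (by simp)

lemma aux_map_eps {W : Type*} [MeasurableSpace W] {N : ℕ} (z z' : Fin N → Z) (p : Fin N → ℝ)
    (g : Z → W) (hg : Measurable g) :
    ((N : ℝ≥0∞)⁻¹ • ∑ i, (ENNReal.ofReal (1 - p i) • Measure.dirac (z i)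
      + ENNReal.ofReal (p i) • Measure.dirac (z' i))).map g =
    (N : ℝ≥0∞)⁻¹ • ∑ i, (ENNReal.ofReal (1 - p i) • Measure.dirac (g (z i))
      + ENNReal.ofReal (p i) • Measure.dirac (g (z' i))) := by
  ext s hs
  rw [Measure.map_apply hg hs]
  simp [Measure.dirac_apply' _ hs, Measure.dirac_apply' _ (hg hs)]
  rfl

lemma aux_W_eps {N : ℕ} (hN : 0 < N) (z z' : Fin N → Z) (p : Fin N → ℝ)
    (hp : ∀ i, p i ∈ Set.Icc (0:ℝ) 1) (c : Z → Z → ℝ≥0∞) (hc0 : ∀ z, c z z = 0)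
    (D : Fin N → ℝ≥0∞) (e : ℝ≥0∞) (hD : ∀ i, c (z' i) (z i) ≤ D i + e) :
    Wcost c ((N : ℝ≥0∞)⁻¹ • ∑ i, (ENNReal.ofReal (1 - p i) • Measure.dirac (z i)
      + ENNReal.ofReal (p i) • Measure.dirac (z' i)))
      ((N : ℝ≥0∞)⁻¹ • ∑ i, Measure.dirac (z i))
    ≤ (N : ℝ≥0∞)⁻¹ * ∑ i, ENNReal.ofReal (p i) * D i + e := by
  refine (iInf₂_le ((N : ℝ≥0∞)⁻¹ • ∑ i, (ENNReal.ofReal (1 - p i) • Measure.dirac (z i, z i)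
      + ENNReal.ofReal (p i) • Measure.dirac (z' i, z i))) ?_).trans ?_
  · refine ⟨aux_map_eps _ _ _ _ measurable_fst, ?_⟩
    rw [aux_map_eps _ _ _ _ measurable_snd]
    simp only [← add_smul, aux_one (hp _), one_smul]
  · rw [aux_lint_eps]
    simp only [hc0, mul_zero, zero_add]
    calc (N : ℝ≥0∞)⁻¹ * ∑ i, ENNReal.ofReal (p i) * c (z' i) (z i)
        ≤ (N : ℝ≥0∞)⁻¹ * ∑ i, (ENNReal.ofReal (p i) * D i + e) := by
          gcongr with i
          calc _ ≤ ENNReal.ofReal (p i) * (D i + e) := by gcongr; exact hD i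
            _ ≤ _ := by
              rw [mul_add]; gcongr
              exact mul_le_of_le_one_left (zero_le) (by simpa using (hp i).2)
      _ = _ := by
          rw [Finset.sum_add_distrib, mul_add]
          congr 1
          simp only [Finset.sum_const, Finset.card_univ, Fintype.card_fin, nsmul_eq_mul]
          rw [← mul_assoc, ENNReal.inv_mul_cancel (by exact_mod_cast hN.ne') (by simp), one_mul]

/-- Conditional flip probabilities of a coupling with empirical second marginal. -/
lemma aux_density {N : ℕ} (hN : 0 < N) (z : Fin N → Z) (π : Measure (Z × Z))
    (hπ : π.map Prod.snd = (N : ℝ≥0∞)⁻¹ • ∑ i, Measure.dirac (z i))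
    (S : Set (Z × Z)) (hS : MeasurableSet S) :
    ∃ q : Fin N → ℝ, (∀ i, q i ∈ Set.Icc (0:ℝ) 1) ∧
      (∀ f : Z → ℝ≥0∞, (N : ℝ≥0∞)⁻¹ * ∑ i, ENNReal.ofReal (q i) * f (z i)
        ≤ ∫⁻ w in S, f w.2 ∂π) ∧
      (∀ (m : ℕ) (f : Z → Fin m → ℝ), Measurable f → ∫ w in S, f w.2 ∂π
        = (N : ℝ)⁻¹ • ∑ i, q i • f (z i)) := by
  set P := (N : ℝ≥0∞)⁻¹ • ∑ i, Measure.dirac (z i) with hP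
  haveI : IsProbabilityMeasure P := aux_prob_emp hN z
  set ν := (π.restrict S).map Prod.snd with hν
  have hle : ν ≤ P := by
    rw [← hπ]; exact Measure.map_mono Measure.restrict_le_self measurable_snd
  haveI : IsFiniteMeasure ν := isFiniteMeasure_of_le P hle
  have hac : ν ≪ P := Measure.absolutelyContinuous_of_le hle
  have hden := Measure.withDensity_rnDeriv_eq ν P hac
  set g := ν.rnDeriv P with hg
  have hgm : Measurable g := Measure.measurable_rnDeriv _ _
  have hg1 : ∀ᵐ w ∂P, g w ≤ 1 := Measure.rnDeriv_le_one_of_le hle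
  have hgi : ∀ i, g (z i) ≤ 1 := by
    intro i
    by_contra hcon
    have h0 : P {w | ¬ g w ≤ 1} = 0 := hg1
    have h1 : P {z i} = 0 := measure_mono_null (by simpa using hcon) h0
    rw [hP] at h1
    simp at h1
    have := h1 i
    simp at this
  have hgt : ∀ᵐ w ∂P, g w < ∞ := hg1.mono fun w h => h.trans_lt one_lt_top
  refine ⟨fun i => (g (z i)).toReal, fun i => ⟨toReal_nonneg, ?_⟩, ?_, ?_⟩
  · exact ENNReal.toReal_le_of_le_ofReal zero_le_one (by simpa using hgi i)
  · intro f
    calc _ = ∫⁻ w, f w ∂ν := by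
          rw [← hden, lintegral_withDensity_eq_lintegral_mul_non_measurable _ hgm hgt, hP,
            aux_lint_emp]
          congr 1
          refine Finset.sum_congr rfl fun i _ => ?_
          rw [ENNReal.ofReal_toReal ((hgi i).trans_lt one_lt_top).ne]; rfl
      _ ≤ _ := lintegral_map_le _ _
  · intro m f hf
    calc _ = ∫ w, f w ∂ν := by
          rw [hν, integral_map measurable_snd.aemeasurable hf.aestronglyMeasurable]
      _ = _ := by
          rw [← hden, integral_withDensity_eq_integral_toReal_smul hgm hgt, hP, aux_int_emp]

end helpers

/-- **Near-optimal projection measure (Proposition 3).**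
Suppose `d(xᵢ) < ∞` for all `i`, let `xᵢ^ε` be an `ε`-optimizer of the
boundary-distance problem at `xᵢ`, and let `p⋆` be an optimal solution of the
projection linear program.  Then
`Q^ε = (1/N) Σᵢ [(1 − p⋆ᵢ) δ_{(xᵢ,aᵢ,yᵢ)} + p⋆ᵢ δ_{(xᵢ^ε,aᵢ,yᵢ)}]`
belongs to the fair set `ℱ` and satisfies
`W_c(Q^ε, P̂_N) ≤ inf_{Q ∈ ℱ} W_c(Q, P̂_N) + ε`. -/
theorem eps_optimizer_of_projection
    {d s m : ℕ} (𝒳 : Set (Fin d → ℝ)) (𝒜 : Type*)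
    [MeasurableSpace 𝒜] [Fintype 𝒜] [MeasurableSingletonClass 𝒜]
    (cbar : ↥𝒳 → ↥𝒳 → ℝ≥0∞)
    (hc_lsc : LowerSemicontinuous (fun p : ↥𝒳 × ↥𝒳 => cbar p.1 p.2))
    (hc_symm : ∀ x x', cbar x x' = cbar x' x)
    (hc_zero : ∀ x x', cbar x x' = 0 ↔ x = x')
    (C : ↥𝒳 → ℝ) (hC_bin : ∀ x, C x = 0 ∨ C x = 1) (hC_meas : Measurable C)
    (ψ : 𝒜 × Bool → Fin s → ℝ)
    (φ : (Fin s → ℝ) → (Fin s → ℝ) → Fin m → ℝ)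
    {N : ℕ} (hN : 0 < N)
    (x : Fin N → ↥𝒳) (a : Fin N → 𝒜) (y : Fin N → Bool)
    (hd_fin : ∀ i, dBoundary cbar C (x i) ≠ ⊤)
    (ε : ℝ) (hε : 0 < ε)
    (xeps : Fin N → ↥𝒳)
    (hxeps_flip : ∀ i, C (xeps i) = 1 - C (x i))
    (hxeps_opt : ∀ i, cbar (x i) (xeps i) ≤
      dBoundary cbar C (x i) + ENNReal.ofReal ε)
    (pstar : Fin N → ℝ)
    -- `p⋆` is a feasible solution of the projection linear program …
    (hp_box : ∀ i, pstar i ∈ Set.Icc (0:ℝ) 1)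
    (hp_con : ∑ i, ((1 - 2 * C (x i)) * pstar i) •
          φ (ψ (a i, y i)) ((N : ℝ)⁻¹ • ∑ j, ψ (a j, y j))
        = - ∑ i, C (x i) • φ (ψ (a i, y i)) ((N : ℝ)⁻¹ • ∑ j, ψ (a j, y j)))
    -- … and it is optimal:
    (hp_opt : ∀ q : Fin N → ℝ, (∀ i, q i ∈ Set.Icc (0:ℝ) 1) →
      (∑ i, ((1 - 2 * C (x i)) * q i) •
          φ (ψ (a i, y i)) ((N : ℝ)⁻¹ • ∑ j, ψ (a j, y j))
        = - ∑ i, C (x i) • φ (ψ (a i, y i)) ((N : ℝ)⁻¹ • ∑ j, ψ (a j, y j))) →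
      ∑ i, ENNReal.ofReal (pstar i) * dBoundary cbar C (x i)
        ≤ ∑ i, ENNReal.ofReal (q i) * dBoundary cbar C (x i)) :
    ((N : ℝ≥0∞)⁻¹ • ∑ i,
        (ENNReal.ofReal (1 - pstar i) • Measure.dirac ((x i, a i, y i) : ↥𝒳 × 𝒜 × Bool)
          + ENNReal.ofReal (pstar i) • Measure.dirac ((xeps i, a i, y i) : ↥𝒳 × 𝒜 × Bool)))
      ∈ fairSet 𝒳 𝒜 C ψ φ
    ∧
    Wcost (prodCost cbar)
        ((N : ℝ≥0∞)⁻¹ • ∑ i,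
          (ENNReal.ofReal (1 - pstar i) • Measure.dirac ((x i, a i, y i) : ↥𝒳 × 𝒜 × Bool)
            + ENNReal.ofReal (pstar i) • Measure.dirac ((xeps i, a i, y i) : ↥𝒳 × 𝒜 × Bool)))
        (empMeasure x a y)
      ≤ (⨅ Q ∈ fairSet 𝒳 𝒜 C ψ φ, Wcost (prodCost cbar) Q (empMeasure x a y))
        + ENNReal.ofReal ε := by
  set ubar : Fin s → ℝ := (N : ℝ)⁻¹ • ∑ j, ψ (a j, y j) with hubar
  constructor
  · refine ⟨aux_prob_eps hN (fun i => (x i, a i, y i)) (fun i => (xeps i, a i, y i)) pstar hp_box,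
      ?_⟩
    have hU : ∫ z' : ↥𝒳 × 𝒜 × Bool, ψ z'.2 ∂((N : ℝ≥0∞)⁻¹ • ∑ i,
        (ENNReal.ofReal (1 - pstar i) • Measure.dirac ((x i, a i, y i) : ↥𝒳 × 𝒜 × Bool)
          + ENNReal.ofReal (pstar i) • Measure.dirac ((xeps i, a i, y i) : ↥𝒳 × 𝒜 × Bool)))
        = ubar := by
      rw [aux_int_eps (fun i => (x i, a i, y i)) (fun i => (xeps i, a i, y i)) pstar hp_box]
      simp only [← add_smul, sub_add_cancel, one_smul, hubar]
    rw [hU, aux_int_eps (fun i => (x i, a i, y i)) (fun i => (xeps i, a i, y i)) pstar hp_box]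
    have : ∑ i, ((1 - pstar i) • C (x i) • φ (ψ (a i, y i)) ubar +
        pstar i • C (xeps i) • φ (ψ (a i, y i)) ubar) = 0 := by
      have h2 : ∀ i, ((1 - pstar i) • C (x i) • φ (ψ (a i, y i)) ubar +
        pstar i • C (xeps i) • φ (ψ (a i, y i)) ubar) =
          ((1 - 2 * C (x i)) * pstar i) • φ (ψ (a i, y i)) ubar
            + C (x i) • φ (ψ (a i, y i)) ubar := by
        intro i
        rw [hxeps_flip]
        module
      simp only [h2, Finset.sum_add_distrib]
      rw [hp_con]; simp
    simp only [this, smul_zero]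
  · have hc0 : ∀ z : ↥𝒳 × 𝒜 × Bool, prodCost cbar z z = 0 := by
      intro z; simp [prodCost, hc_zero]
    refine (aux_W_eps hN (fun i => (x i, a i, y i)) (fun i => (xeps i, a i, y i)) pstar hp_box
      (prodCost cbar) hc0 (fun i => dBoundary cbar C (x i)) (ENNReal.ofReal ε) ?_).trans ?_
    · intro i
      simp only [prodCost, if_true, add_zero]
      rw [hc_symm]; exact hxeps_opt i
    gcongr
    refine le_iInf₂ fun Q hQ => le_iInf₂ fun π hπ => ?_
    obtain ⟨hQp, hQf⟩ := hQ
    obtain ⟨hπ1, hπ2⟩ := hπ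
    by_cases hfin : ∫⁻ p, prodCost cbar p.1 p.2 ∂π = ⊤
    · rw [hfin]; exact le_top
    have hπp : IsProbabilityMeasure π := by
      constructor
      have : (π.map Prod.fst) Set.univ = 1 := by rw [hπ1]; simp
      rwa [Measure.map_apply measurable_fst MeasurableSet.univ, Set.preimage_univ] at this
    -- labels and attributes agree almost surely
    have hae : ∀ᵐ p ∂π, p.1.2 = p.2.2 := by
      set T : Set ((↥𝒳 × 𝒜 × Bool) × (↥𝒳 × 𝒜 × Bool)) := {p | ¬ p.1.2 = p.2.2} with hT
      have hTm : MeasurableSet T := by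
        refine (measurableSet_eq_fun ?_ ?_).compl
        · exact measurable_fst.snd
        · exact measurable_snd.snd
      have h1 : ∫⁻ p, T.indicator (fun _ => ⊤) p ∂π ≤ ∫⁻ p, prodCost cbar p.1 p.2 ∂π := by
        refine lintegral_mono fun p => ?_
        by_cases hp : p ∈ T
        · have : ¬ (p.1.2.1 = p.2.2.1 ∧ p.1.2.2 = p.2.2.2) := fun h => hp (Prod.ext h.1 h.2)
          simp only [prodCost]
          by_cases h1 : p.1.2.1 = p.2.2.1
          · have h2 : ¬ p.1.2.2 = p.2.2.2 := fun h => this ⟨h1, h⟩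
            simp [h2]
          · simp [h1]
        · simp [hp]
      rw [lintegral_indicator_const hTm] at h1
      by_contra hne
      have h0 : π T ≠ 0 := hne
      rw [ENNReal.top_mul h0] at h1
      exact hfin (top_le_iff.mp h1)
    set S : Set ((↥𝒳 × 𝒜 × Bool) × (↥𝒳 × 𝒜 × Bool)) := {p | ¬ C p.1.1 = C p.2.1} with hS
    have hSm : MeasurableSet S :=
      (measurableSet_eq_fun (hC_meas.comp measurable_fst.fst)
        (hC_meas.comp measurable_snd.fst)).compl
    have hπ2' : π.map Prod.snd = (N : ℝ≥0∞)⁻¹ • ∑ i,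
      Measure.dirac ((fun i => (x i, a i, y i)) i) := hπ2
    obtain ⟨q, hq, hq1, hq2⟩ := aux_density hN (fun i => (x i, a i, y i)) π hπ2' S hSm
    have hψm : Measurable ψ := measurable_of_finite ψ
    have hmean : ∫ z', ψ z'.2 ∂Q = ubar := by
      have hm : Measurable fun z : ↥𝒳 × 𝒜 × Bool => ψ z.2 := hψm.comp measurable_snd
      calc ∫ z', ψ z'.2 ∂Q = ∫ p, ψ p.1.2 ∂π := by
            rw [← hπ1, integral_map measurable_fst.aemeasurable hm.aestronglyMeasurable]
        _ = ∫ p, ψ p.2.2 ∂π := by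
            refine integral_congr_ae (hae.mono fun p hp => ?_)
            simp only [hp]
        _ = ∫ z', ψ z'.2 ∂(π.map Prod.snd) := by
            rw [integral_map measurable_snd.aemeasurable hm.aestronglyMeasurable]
        _ = ubar := by
            rw [hπ2', aux_int_emp]
    rw [hmean] at hQf
    set F : 𝒜 × Bool → Fin m → ℝ := fun w => φ (ψ w) ubar with hF
    have hFm : Measurable F := measurable_of_finite F
    obtain ⟨K, hK⟩ : ∃ K, ∀ w, ‖F w‖ ≤ K := by
      obtain ⟨K, hK⟩ := (Set.finite_range fun w => ‖F w‖).bddAbove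
      exact ⟨K, fun w => hK ⟨w, rfl⟩⟩
    have hcon : ∑ i, ((1 - 2 * C (x i)) * q i) • F (a i, y i)
        = - ∑ i, C (x i) • F (a i, y i) := by
      have hm1 : Measurable fun z : ↥𝒳 × 𝒜 × Bool => C z.1 • F z.2 :=
        (hC_meas.comp measurable_fst).smul (hFm.comp measurable_snd)
      have hm2 : Measurable fun z : ↥𝒳 × 𝒜 × Bool => (1 - 2 * C z.1) • F z.2 :=
        (measurable_const.sub ((hC_meas.comp measurable_fst).const_mul 2)).smul
          (hFm.comp measurable_snd)
      have hb1 : ∀ z : ↥𝒳 × 𝒜 × Bool, ‖C z.1 • F z.2‖ ≤ K := by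
        intro z
        have := hK z.2
        have h0 := (norm_nonneg (F z.2)).trans this
        rcases hC_bin z.1 with h | h <;> simp [h, this, h0]
      have hb2 : ∀ z : ↥𝒳 × 𝒜 × Bool, ‖(1 - 2 * C z.1) • F z.2‖ ≤ K := by
        intro z
        have := hK z.2
        rcases hC_bin z.1 with h | h
        · simp [h, this]
        · rw [h]; norm_num [this]
      have hi1 : Integrable (fun p : (↥𝒳 × 𝒜 × Bool) × (↥𝒳 × 𝒜 × Bool) =>
          C p.2.1 • F p.2.2) π :=
        Integrable.of_bound (hm1.comp measurable_snd).aestronglyMeasurable K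
          (Filter.Eventually.of_forall fun p => hb1 p.2)
      have hi2 : Integrable (fun p : (↥𝒳 × 𝒜 × Bool) × (↥𝒳 × 𝒜 × Bool) =>
          (1 - 2 * C p.2.1) • F p.2.2) π :=
        Integrable.of_bound (hm2.comp measurable_snd).aestronglyMeasurable K
          (Filter.Eventually.of_forall fun p => hb2 p.2)
      have key : (N : ℝ)⁻¹ • ∑ i, C (x i) • F (a i, y i)
          + (N : ℝ)⁻¹ • ∑ i, q i • (1 - 2 * C (x i)) • F (a i, y i) = 0 := by
        have e1 : ∫ p, C p.2.1 • F p.2.2 ∂π = (N : ℝ)⁻¹ • ∑ i, C (x i) • F (a i, y i) := by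
          rw [← integral_map (φ := Prod.snd) measurable_snd.aemeasurable
            (f := fun z : ↥𝒳 × 𝒜 × Bool => C z.1 • F z.2) hm1.aestronglyMeasurable, hπ2',
            aux_int_emp]
        have e2 := hq2 m _ hm2
        rw [← e1, ← e2, ← integral_indicator hSm, ← integral_add hi1 (hi2.indicator hSm),
          ← hQf, ← hπ1, integral_map measurable_fst.aemeasurable hm1.aestronglyMeasurable]
        refine integral_congr_ae (hae.mono fun p hp => ?_)
        simp only [hp]
        by_cases hpS : p ∈ S
        · rw [Set.indicator_of_mem hpS, ← add_smul]
          congr 1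
          have hpS' : ¬ C p.1.1 = C p.2.1 := hpS
          rcases hC_bin p.1.1 with h | h <;> rcases hC_bin p.2.1 with h' | h' <;>
            simp [h, h'] at hpS' ⊢ <;> norm_num
        · rw [Set.indicator_of_notMem hpS, add_zero]
          have hpS' : C p.1.1 = C p.2.1 := not_not.mp hpS
          rw [hpS']
      rw [← smul_add] at key
      have hN0 : (N : ℝ)⁻¹ ≠ 0 := inv_ne_zero (by exact_mod_cast hN.ne')
      have key2 := (smul_eq_zero.mp key).resolve_left hN0
      rw [eq_neg_iff_add_eq_zero, add_comm, ← key2]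
      congr 1
      refine Finset.sum_congr rfl fun i _ => ?_
      rw [smul_smul, mul_comm]
    have hopt := hp_opt q hq hcon
    calc _ ≤ (N : ℝ≥0∞)⁻¹ * ∑ i, ENNReal.ofReal (q i) * dBoundary cbar C (x i) := by
          gcongr
      _ ≤ ∫⁻ w in S, dBoundary cbar C w.2.1 ∂π := hq1 fun z => dBoundary cbar C z.1
      _ ≤ ∫⁻ w in S, prodCost cbar w.1 w.2 ∂π := by
          refine setLIntegral_mono' hSm fun p hp => ?_
          have hp' : ¬ C p.1.1 = C p.2.1 := hp
          have h1 : C p.1.1 = 1 - C p.2.1 := by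
            rcases hC_bin p.1.1 with h | h <;> rcases hC_bin p.2.1 with h' | h' <;>
              simp [h, h'] at hp' ⊢
          have h2 : dBoundary cbar C p.2.1 ≤ cbar p.2.1 p.1.1 := iInf₂_le p.1.1 h1
          rw [hc_symm] at h2
          refine h2.trans ?_
          simp only [prodCost, add_assoc]
          exact le_self_add
      _ ≤ _ := setLIntegral_le_lintegral _ _
end
end

section
/- Strong duality for the ε-fairness projection: given φ_i := φ(u_i, E_{P̂_N}[U]) ∈ ℝ^m, labels 𝒞(x_i) ∈ {0,1}, values d(x_i) ∈ [0,∞] and ε ∈ ℝ^m_+, the optimal value of the linear program min_p { (1/N) Σ_i p_i d(x_i) : p ∈ [0,1]^N, Σ_i (1−2𝒞(x_i)) φ_i p_i + Σ_i 𝒞(x_i) φ_i ≤ N ε } (equal to +∞ if infeasible) equals 𝒟_ε(P̂_N) := sup_{γ ∈ ℝ^m_+} { −γᵀε + (1/N) Σ_i [ γᵀφ_i 𝒞(x_i) + ( d(x_i) + (1−2𝒞(x_i)) γᵀφ_i )⁻ ] }, where (t)⁻ = min{t,0} and (∞ + r)⁻ = 0 for any real r. -/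
open BigOperators ENNReal

noncomputable section

theorem aux_sep {N m : ℕ} (K : Set (Fin N → ℝ)) (hK : IsCompact K) (hKc : Convex ℝ K)
    (c : Fin N → ℝ) (A : Fin m → Fin N → ℝ) (b : Fin m → ℝ)
    (hf : ∀ p ∈ K, 0 ≤ ∑ i, c i * p i) (t : ℝ)
    (h : ∀ p ∈ K, (∀ k, (∑ i, A k i * p i) + b k ≤ 0) → t < ∑ i, c i * p i) :
    ∃ γ : Fin m → ℝ, (∀ k, 0 ≤ γ k) ∧
      ∀ p ∈ K, t < (∑ i, c i * p i) + ∑ k, γ k * ((∑ i, A k i * p i) + b k) := by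
  let F : (Fin N → ℝ) → ℝ × (Fin m → ℝ) :=
    fun p => (∑ i, c i * p i, fun k => (∑ i, A k i * p i) + b k)
  have hFc : Continuous F := by fun_prop
  have hAc : IsCompact (F '' K) := hK.image hFc
  have hAconv : Convex ℝ (F '' K) := by
    rintro _ ⟨p, hp, rfl⟩ _ ⟨q, hq, rfl⟩ x y hx hy hxy
    refine ⟨x • p + y • q, hKc hp hq hx hy hxy, ?_⟩
    ext k
    · simp only [F, Pi.add_apply, Pi.smul_apply, smul_eq_mul, Prod.fst_add, Prod.smul_fst,
        Finset.mul_sum, ← Finset.sum_add_distrib]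
      exact Finset.sum_congr rfl fun i _ => by ring
    · simp only [F, Pi.add_apply, Pi.smul_apply, smul_eq_mul, Prod.snd_add, Prod.smul_snd,
        mul_add, Finset.mul_sum]
      have : b k = x * b k + y * b k := by rw [← add_mul, hxy, one_mul]
      have h2 : ∑ i, (A k i * (x * p i) + A k i * (y * q i))
          = ∑ i, x * (A k i * p i) + ∑ i, y * (A k i * q i) := by
        rw [← Finset.sum_add_distrib]
        exact Finset.sum_congr rfl fun i _ => by ring
      linarith
  have hBc : IsClosed (Set.Iic ((t, 0) : ℝ × (Fin m → ℝ))) := isClosed_Iic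
  have hBconv : Convex ℝ (Set.Iic ((t, 0) : ℝ × (Fin m → ℝ))) := convex_Iic _
  have hdis : Disjoint (F '' K) (Set.Iic ((t, 0) : ℝ × (Fin m → ℝ))) := by
    rw [Set.disjoint_left]
    rintro _ ⟨p, hp, rfl⟩ hle
    have h1 : F p ≤ (t, 0) := hle
    exact absurd (h p hp fun k => h1.2 k) (not_lt.2 h1.1)
  obtain ⟨L, u, v, hL1, huv, hL2⟩ :=
    geometric_hahn_banach_compact_closed hAconv hAc hBconv hBc hdis
  have hneg : ∀ w : ℝ × (Fin m → ℝ), w ≤ 0 → 0 ≤ L w := by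
    intro w hw
    by_contra hcon
    push Not at hcon
    have h0 : ∀ s : ℝ, 0 ≤ s → v < L (t, 0) + s * L w := by
      intro s hs
      have : (t, 0) + s • w ∈ Set.Iic ((t, 0) : ℝ × (Fin m → ℝ)) := by
        have : s • w ≤ 0 := smul_nonpos_of_nonneg_of_nonpos hs hw
        simpa using this
      have := hL2 _ this
      simpa using this
    have hv0 : v < L (t, 0) := by simpa using h0 0 le_rfl
    have := h0 ((L (t, 0) - v) / (-L w)) (div_nonneg (by linarith) (by linarith))
    have h3 : (L (t, 0) - v) / (-L w) * L w = -(L (t, 0) - v) := by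
      field_simp [hcon.ne]
    linarith
  have hdec : ∀ s : ℝ, ∀ w : Fin m → ℝ, L (s, w) = s * L (1, 0) + ∑ k, w k * L (0, Pi.single k 1) := by
    intro s w
    have : (s, w) = s • ((1, 0) : ℝ × (Fin m → ℝ)) +
        ∑ k, w k • ((0, Pi.single k 1) : ℝ × (Fin m → ℝ)) := by
      ext j
      · simp [Prod.fst_sum]
      · simp [Prod.snd_sum, Finset.sum_apply, Pi.single_apply]
    rw [this, map_add, map_sum]
    simp only [map_smul, smul_eq_mul]
  have hlam : 0 ≤ -L (1, 0) := by
    have := hneg (-1, 0) ⟨by simp, le_rfl⟩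
    rw [hdec] at this
    simpa using this
  have hgam : ∀ k, 0 ≤ -L (0, Pi.single k 1) := by
    intro k
    have := hneg (-(0, Pi.single k 1)) (by
      rw [neg_nonpos]
      exact ⟨le_rfl, by simp⟩)
    rwa [map_neg] at this
  set lam := -L (1, 0) with hlamdef
  set g : Fin m → ℝ := fun k => -L (0, Pi.single k 1) with hgdef
  have hv : v < -lam * t := by
    have := hL2 (t, 0) (Set.mem_Iic.2 le_rfl)
    rw [hdec] at this
    simp at this
    simp only [hlamdef]; linarith
  have hkey : ∀ p ∈ K, -u < lam * (∑ i, c i * p i) + ∑ k, g k * ((∑ i, A k i * p i) + b k) := by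
    intro p hp
    have := hL1 (F p) ⟨p, hp, rfl⟩
    rw [show F p = (∑ i, c i * p i, fun k => (∑ i, A k i * p i) + b k) from rfl, hdec] at this
    have h4 : ∑ k, g k * ((∑ i, A k i * p i) + b k)
        = - ∑ k, ((∑ i, A k i * p i) + b k) * L (0, Pi.single k 1) := by
      rw [← Finset.sum_neg_distrib]
      exact Finset.sum_congr rfl fun i _ => by simp only [hgdef]; ring
    rw [h4]
    simp only [hlamdef]; linarith
  rcases hlam.eq_or_lt with h0 | hpos
  · rw [← h0] at hkey hv
    have hu : 0 < -u := by linarith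
    refine ⟨fun k => ((|t| + 1) / (-u)) * g k, fun k => mul_nonneg (by positivity) (hgam k), ?_⟩
    intro p hp
    have h6 := hkey p hp
    have h7 := hf p hp
    rw [zero_mul, zero_add] at h6
    simp only [mul_assoc, ← Finset.mul_sum]
    have h8 : (|t| + 1) / (-u) * (-u) ≤
        (|t| + 1) / (-u) * ∑ k, g k * ((∑ i, A k i * p i) + b k) :=
      mul_le_mul_of_nonneg_left h6.le (by positivity)
    rw [div_mul_cancel₀ _ hu.ne'] at h8
    have := le_abs_self t
    linarith
  · refine ⟨fun k => lam⁻¹ * g k, fun k => mul_nonneg (by positivity) (hgam k), ?_⟩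
    intro p hp
    have := hkey p hp
    simp only [mul_assoc, ← Finset.mul_sum]
    have h5 : lam * t < lam * (∑ i, c i * p i + lam⁻¹ * ∑ k, g k * ((∑ i, A k i * p i) + b k)) := by
      rw [mul_add, mul_inv_cancel_left₀ hpos.ne']
      linarith
    exact lt_of_mul_lt_mul_left h5 hlam

/-- **Strong duality for the ε-fairness projection (Proposition 6).**
Given `φᵢ := φ(uᵢ, E_{P̂_N}[U]) ∈ ℝ^m`, binary labels `𝒞(xᵢ) ∈ {0,1}`, values
`d(xᵢ) ∈ [0,∞]` and a tolerance `ε ∈ ℝ^m_+`, the optimal value of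
`min_p { (1/N) Σᵢ pᵢ d(xᵢ) : p ∈ [0,1]^N, Σᵢ (1−2𝒞(xᵢ)) φᵢ pᵢ + Σᵢ 𝒞(xᵢ) φᵢ ≤ N ε }`
(equal to `+∞` if infeasible) equals
`𝒟_ε(P̂_N) = sup_{γ ∈ ℝ^m_+} { −γᵀε + (1/N) Σᵢ [ γᵀφᵢ 𝒞(xᵢ) + (d(xᵢ) + (1−2𝒞(xᵢ)) γᵀφᵢ)⁻ ] }`,
the equality being read in the extended reals. -/
theorem eps_fairness_projection_strong_duality
    {N m : ℕ} (hN : 0 < N)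
    (φv : Fin N → Fin m → ℝ)       -- φᵢ = φ(uᵢ, E_{P̂_N}[U])
    (C : Fin N → ℝ) (hC : ∀ i, C i = 0 ∨ C i = 1)   -- 𝒞(xᵢ)
    (dv : Fin N → ℝ≥0∞)             -- d(xᵢ)
    (ε : Fin m → ℝ) (hε : ∀ k, 0 ≤ ε k) :
    ((⨅ p ∈ {p : Fin N → ℝ |
        (∀ i, p i ∈ Set.Icc (0:ℝ) 1) ∧
        ∀ k, (∑ i, (1 - 2 * C i) * φv i k * p i) + ∑ i, C i * φv i k ≤ N * ε k},
        (N : ℝ≥0∞)⁻¹ * ∑ i, ENNReal.ofReal (p i) * dv i : ℝ≥0∞) : EReal)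
    =
    ⨆ γ : {γ : Fin m → ℝ // ∀ k, 0 ≤ γ k},
      (((- ∑ k, γ.1 k * ε k) +
        (N : ℝ)⁻¹ * ∑ i, ((∑ k, γ.1 k * φv i k) * C i +
          negPartE (dv i) ((1 - 2 * C i) * ∑ k, γ.1 k * φv i k)) : ℝ) : EReal) := by
  have hNR : (0:ℝ) < N := by exact_mod_cast hN
  have hcost : ∀ p : Fin N → ℝ, (∀ i, 0 ≤ p i) → (∀ i, dv i = ⊤ → p i = 0) →
      (N : ℝ≥0∞)⁻¹ * ∑ i, ENNReal.ofReal (p i) * dv i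
        = ENNReal.ofReal ((N : ℝ)⁻¹ * ∑ i, (dv i).toReal * p i) := by
    intro p hp hp0
    rw [ENNReal.ofReal_mul (by positivity), ENNReal.ofReal_inv_of_pos hNR, ENNReal.ofReal_natCast,
      ENNReal.ofReal_sum_of_nonneg fun i _ => mul_nonneg ENNReal.toReal_nonneg (hp i)]
    congr 1
    refine Finset.sum_congr rfl fun i _ => ?_
    by_cases hd : dv i = ⊤
    · simp [hp0 i hd]
    · rw [ENNReal.ofReal_mul ENNReal.toReal_nonneg, ENNReal.ofReal_toReal hd, mul_comm]
  have hswap : ∀ (γ : Fin m → ℝ) (p : Fin N → ℝ),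
      ∑ k, γ k * ((∑ i, ((1 - 2 * C i) * φv i k) * p i) + (∑ i, C i * φv i k - N * ε k))
      = -(N * ∑ k, γ k * ε k) + ∑ i, ((∑ k, γ k * φv i k) * C i
          + ((1 - 2 * C i) * ∑ k, γ k * φv i k) * p i) := by
    intro γ p
    simp only [mul_add, mul_sub, Finset.sum_add_distrib, Finset.sum_sub_distrib, Finset.mul_sum,
      Finset.sum_mul]
    rw [Finset.sum_comm (f := fun k i => γ k * ((1 - 2 * C i) * φv i k * p i)),
      Finset.sum_comm (f := fun k i => γ k * (C i * φv i k))]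
    have e1 : ∀ i k, γ k * ((1 - 2 * C i) * φv i k * p i) = (1 - 2 * C i) * (γ k * φv i k) * p i :=
      fun i k => by ring
    have e2 : ∀ i k, γ k * (C i * φv i k) = γ k * φv i k * C i := fun i k => by ring
    have e3 : ∀ k, γ k * (N * ε k) = N * (γ k * ε k) := fun k => by ring
    simp only [e1, e2, e3]
    ring
  apply le_antisymm
  · by_contra hcon
    rw [not_le] at hcon
    obtain ⟨t, ht1, ht2⟩ := EReal.lt_iff_exists_real_btwn.1 hcon
    let K : Set (Fin N → ℝ) := Set.Icc 0 (fun i => if dv i = ⊤ then 0 else 1)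
    have hKp : ∀ p ∈ K, (∀ i, p i ∈ Set.Icc (0:ℝ) 1) ∧ (∀ i, dv i = ⊤ → p i = 0) := by
      intro p hp
      refine ⟨fun i => ⟨hp.1 i, (hp.2 i).trans ?_⟩, fun i hi => le_antisymm ?_ (hp.1 i)⟩
      · dsimp only; split_ifs <;> norm_num
      · have := hp.2 i
        simpa [hi] using this
    obtain ⟨γ, hγ, hγK⟩ := aux_sep K isCompact_Icc (convex_Icc _ _) (fun i => (dv i).toReal)
      (fun k i => (1 - 2 * C i) * φv i k) (fun k => ∑ i, C i * φv i k - N * ε k)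
      (fun p hp => Finset.sum_nonneg fun i _ => mul_nonneg ENNReal.toReal_nonneg (hp.1 i))
      (N * t) (by
        intro p hp hk
        obtain ⟨hp1, hp2⟩ := hKp p hp
        have hle := iInf₂_le (f := fun (p : Fin N → ℝ) (_ : p ∈ {p : Fin N → ℝ |
          (∀ i, p i ∈ Set.Icc (0:ℝ) 1) ∧
          ∀ k, (∑ i, (1 - 2 * C i) * φv i k * p i) + ∑ i, C i * φv i k ≤ N * ε k}) =>
          (N : ℝ≥0∞)⁻¹ * ∑ i, ENNReal.ofReal (p i) * dv i) p
          ⟨hp1, fun k => by have := hk k; linarith⟩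
        have h1 := ht2.trans_le (EReal.coe_ennreal_le_coe_ennreal_iff.2 hle)
        have hnn : 0 ≤ (N : ℝ)⁻¹ * ∑ i, (dv i).toReal * p i :=
          mul_nonneg (by positivity)
            (Finset.sum_nonneg fun i _ => mul_nonneg ENNReal.toReal_nonneg (hp.1 i))
        rw [hcost p (fun i => (hp1 i).1) hp2, EReal.coe_ennreal_ofReal, max_eq_left hnn,
          EReal.coe_lt_coe_iff, inv_mul_eq_div, lt_div_iff₀ hNR] at h1
        linarith)
    let q : Fin N → ℝ := fun i => if dv i = ⊤ then 0 else
      if (dv i).toReal + (1 - 2 * C i) * ∑ k, γ k * φv i k < 0 then 1 else 0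
    have hq : q ∈ K := by
      refine ⟨fun i => ?_, fun i => ?_⟩
      · simp only [q, Pi.zero_apply]; split_ifs <;> norm_num
      · simp only [q]; split_ifs <;> norm_num
    have h2 := hγK q hq
    rw [hswap] at h2
    have h3 : ∀ i, negPartE (dv i) ((1 - 2 * C i) * ∑ k, γ k * φv i k)
        = (dv i).toReal * q i + ((1 - 2 * C i) * ∑ k, γ k * φv i k) * q i := by
      intro i
      simp only [negPartE, q]
      split_ifs with h4 h5
      · simp
      · rw [min_eq_left h5.le]; ring
      · rw [min_eq_right (not_lt.1 h5)]; ring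
    have h6 := (le_iSup (fun γ : {γ : Fin m → ℝ // ∀ k, 0 ≤ γ k} =>
      (((- ∑ k, γ.1 k * ε k) +
        (N : ℝ)⁻¹ * ∑ i, ((∑ k, γ.1 k * φv i k) * C i +
          negPartE (dv i) ((1 - 2 * C i) * ∑ k, γ.1 k * φv i k)) : ℝ) : EReal)) ⟨γ, hγ⟩).trans_lt ht1
    rw [EReal.coe_lt_coe_iff] at h6
    simp only [h3] at h6
    have h7 := mul_lt_mul_of_pos_left h6 hNR
    rw [mul_add, mul_inv_cancel_left₀ hNR.ne'] at h7
    simp only [Finset.sum_add_distrib] at h2 h7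
    linarith
  · refine iSup_le fun γ => ?_
    obtain ⟨γ, hγ⟩ := γ
    dsimp only
    refine le_trans (b := ((ENNReal.ofReal ((- ∑ k, γ k * ε k) +
        (N : ℝ)⁻¹ * ∑ i, ((∑ k, γ k * φv i k) * C i +
          negPartE (dv i) ((1 - 2 * C i) * ∑ k, γ k * φv i k))) : ℝ≥0∞) : EReal)) ?_ ?_
    · rw [EReal.coe_ennreal_ofReal, EReal.coe_le_coe_iff]
      exact le_max_left _ _
    · rw [EReal.coe_ennreal_le_coe_ennreal_iff]
      refine le_iInf₂ fun p hp => ?_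
      obtain ⟨hp1, hp2⟩ := hp
      by_cases hz : ∀ i, dv i = ⊤ → p i = 0
      · rw [hcost p (fun i => (hp1 i).1) hz]
        apply ENNReal.ofReal_le_ofReal
        rw [← mul_le_mul_iff_of_pos_left hNR, mul_add, mul_inv_cancel_left₀ hNR.ne',
          mul_inv_cancel_left₀ hNR.ne']
        have h1 := hswap γ p
        have h2 : ∑ k, γ k * ((∑ i, ((1 - 2 * C i) * φv i k) * p i)
            + (∑ i, C i * φv i k - N * ε k)) ≤ 0 :=
          Finset.sum_nonpos fun k _ => mul_nonpos_of_nonneg_of_nonpos (hγ k)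
            (by have := hp2 k; linarith)
        have h3 : ∑ i, negPartE (dv i) ((1 - 2 * C i) * ∑ k, γ k * φv i k)
            ≤ ∑ i, ((dv i).toReal * p i + ((1 - 2 * C i) * ∑ k, γ k * φv i k) * p i) := by
          refine Finset.sum_le_sum fun i _ => ?_
          simp only [negPartE]
          split_ifs with hd
          · simp [hz i hd]
          · rw [← add_mul]
            obtain ⟨ha, hb⟩ := hp1 i
            rcases le_total ((dv i).toReal + (1 - 2 * C i) * ∑ k, γ k * φv i k) 0 with h | h
            · rw [min_eq_left h]; nlinarith
            · rw [min_eq_right h]; positivity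
        simp only [Finset.sum_add_distrib] at h1 h3 ⊢
        linarith
      · push Not at hz
        obtain ⟨i, hi, hpi⟩ := hz
        have hpos : 0 < p i := lt_of_le_of_ne (hp1 i).1 hpi.symm
        have : ∑ i, ENNReal.ofReal (p i) * dv i = ⊤ := by
          rw [ENNReal.sum_eq_top]
          refine ⟨i, Finset.mem_univ _, ?_⟩
          rw [hi, ENNReal.mul_top]
          simpa using hpos
        rw [this, ENNReal.mul_top (by simp)]
        exact le_top
end
end
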